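/- Let S be a regular semigroup. Then R(S) = {(s,t,α) ∈ T(S) : s 𝓛 t} is a regular subsemigroup of T(S) in which every element is a product of two idempotents of R(S) (so R(S) is a semiband of depth 2), and the map φ : S → R(S), s ↦ (s,s,σ), is an injective semigroup homomorphism. Moreover, for each Green relation 𝓚 ∈ {𝓗, 𝓛, 𝓡, 𝓓, 𝓙}, the restriction of 𝓚 on T(S) to R(S) equals 𝓚 computed in R(S), and the restriction to R(S) of the natural partial order of T(S) equals the natural partial order of R(S). -/

import Mathlib

namespace SemibandEmbed

/-- The two-element right-zero semigroup `R₂ = {σ, τ}`. -/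
inductive R2 : Type where
  | σ : R2
  | τ : R2
  deriving DecidableEq

section GreenDefs

variable {S : Type*} [Semigroup S]

/-- Green's relation 𝓡 : `a 𝓡 b` iff `a S¹ = b S¹` (inside `S¹ = WithOne S`). -/
def greenR (a b : S) : Prop :=
  {x : WithOne S | ∃ u : WithOne S, x = (a : WithOne S) * u} =
    {x : WithOne S | ∃ u : WithOne S, x = (b : WithOne S) * u}

/-- Green's relation 𝓛 : `a 𝓛 b` iff `S¹ a = S¹ b`. -/
def greenL (a b : S) : Prop :=
  {x : WithOne S | ∃ u : WithOne S, x = u * (a : WithOne S)} =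
    {x : WithOne S | ∃ u : WithOne S, x = u * (b : WithOne S)}

/-- Green's relation 𝓗 = 𝓛 ∩ 𝓡. -/
def greenH (a b : S) : Prop := greenL a b ∧ greenR a b

/-- Green's relation 𝓓 : `a 𝓓 b` iff `a 𝓡 c` and `c 𝓛 b` for some `c`. -/
def greenD (a b : S) : Prop := ∃ c : S, greenR a c ∧ greenL c b

/-- Green's relation 𝓙 : `a 𝓙 b` iff `S¹ a S¹ = S¹ b S¹`. -/
def greenJ (a b : S) : Prop :=
  {x : WithOne S | ∃ u v : WithOne S, x = u * (a : WithOne S) * v} =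
    {x : WithOne S | ∃ u v : WithOne S, x = u * (b : WithOne S) * v}

/-- Mitsch's natural partial order on a semigroup. -/
def natLe (a b : S) : Prop := ∃ x y : S, a = x * b ∧ a = b * y ∧ a = a * y

end GreenDefs

/-- A semigroup is idempotent covered if every element `s` satisfies `s e = s = f s`
for some idempotents `e`, `f`. -/
def IdemCovered (S : Type*) [Semigroup S] : Prop :=
  ∀ s : S, ∃ e f : S, IsIdempotentElem e ∧ IsIdempotentElem f ∧ s * e = s ∧ f * s = s

/-- A semigroup is regular if every `a` satisfies `a x a = a` for some `x`. -/
def IsRegularSemigroup (S : Type*) [Semigroup S] : Prop :=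
  ∀ a : S, ∃ x : S, a * x * a = a

/-- A semigroup is periodic if every element generates a finite monogenic subsemigroup,
i.e. `aᵐ = aⁿ` for some `0 < m < n` (powers computed in `S¹ = WithOne S`). -/
def IsPeriodic (S : Type*) [Semigroup S] : Prop :=
  ∀ a : S, ∃ m n : ℕ, 0 < m ∧ m < n ∧ (a : WithOne S) ^ m = (a : WithOne S) ^ n

/-- `𝓗` is a left congruence. -/
def IsLeftCongH (S : Type*) [Semigroup S] : Prop :=
  ∀ a b c : S, greenH a b → greenH (c * a) (c * b)

/-- `𝓗` is a right congruence. -/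
def IsRightCongH (S : Type*) [Semigroup S] : Prop :=
  ∀ a b c : S, greenH a b → greenH (a * c) (b * c)

/-- A semigroup is completely regular if every element is 𝓗-related to an idempotent. -/
def IsCompletelyRegular (S : Type*) [Semigroup S] : Prop :=
  ∀ a : S, ∃ e : S, IsIdempotentElem e ∧ greenH a e

section SemidirectProduct

variable {S : Type*} [Semigroup S]

/-- The multiplication of the semidirect product `(S × S) * R₂`:
`(t₁,s₁,σ)·(t₂,s₂,α) = (t₁s₂, s₁s₂, α)` and `(t₁,s₁,τ)·(t₂,s₂,α) = (t₁t₂, s₁t₂, α)`. -/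
def sdMul (x y : S × S × R2) : S × S × R2 :=
  match x, y with
  | (t₁, s₁, R2.σ), (_, s₂, α) => (t₁ * s₂, s₁ * s₂, α)
  | (t₁, s₁, R2.τ), (t₂, _, α) => (t₁ * t₂, s₁ * t₂, α)

instance : Mul (S × S × R2) := ⟨sdMul⟩

theorem sdMul_def (x y : S × S × R2) : x * y = sdMul x y := rfl

instance : Semigroup (S × S × R2) where
  mul_assoc x y z := by
    obtain ⟨t₁, s₁, α₁⟩ := x
    obtain ⟨t₂, s₂, α₂⟩ := y
    obtain ⟨t₃, s₃, α₃⟩ := z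
    cases α₁ <;> cases α₂ <;> simp [sdMul_def, sdMul, mul_assoc]

/-- The set `E = {(s,t,α) ∈ E(T*R₂) : s ∈ S¹ t}`. -/
def Eset (S : Type*) [Semigroup S] : Set (S × S × R2) :=
  {x | IsIdempotentElem x ∧ ∃ a : WithOne S, (x.1 : WithOne S) = a * (x.2.1 : WithOne S)}

/-- `T(S)`: the subsemigroup of the semidirect product generated by `E`. -/
def TS (S : Type*) [Semigroup S] : Subsemigroup (S × S × R2) :=
  Subsemigroup.closure (Eset S)

/-- Green's `𝓛` is a right congruence. -/
theorem greenL_mul_right {S : Type*} [Semigroup S] {a b : S} (hab : greenL a b) (c : S) :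
    greenL (a * c) (b * c) := by
  have key : ∀ {a b : S}, greenL a b → ∀ x : WithOne S,
      (∃ u : WithOne S, x = u * ((a * c : S) : WithOne S)) →
      (∃ u : WithOne S, x = u * ((b * c : S) : WithOne S)) := by
    intro a b hab x hx
    obtain ⟨u, rfl⟩ := hx
    have h1 : (u * (a : WithOne S)) ∈
        {x : WithOne S | ∃ u : WithOne S, x = u * (a : WithOne S)} := ⟨u, rfl⟩
    rw [greenL] at hab
    rw [hab] at h1
    obtain ⟨w, hw⟩ := h1
    refine ⟨w, ?_⟩
    rw [WithOne.coe_mul, WithOne.coe_mul, ← mul_assoc, hw, mul_assoc]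
  have hab' : greenL b a := hab.symm
  ext x
  exact ⟨key hab x, key hab' x⟩

/-- `R(S) = {(s,t,α) ∈ T(S) : s 𝓛 t}`, a subsemigroup of `T(S)`. -/
def RS (S : Type*) [Semigroup S] : Subsemigroup ↥(TS S) where
  carrier := {x | greenL (x : S × S × R2).1 (x : S × S × R2).2.1}
  mul_mem' := by
    rintro ⟨⟨s, t, α⟩, hx⟩ ⟨⟨u, v, β⟩, hy⟩ hxs hys
    simp only [Set.mem_setOf_eq] at hxs hys ⊢
    cases α <;> exact greenL_mul_right hxs _

end SemidirectProduct


section Aux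

variable {S : Type*} [Semigroup S]

theorem withOneCases {P : WithOne S → Prop} (one : P 1)
    (coe : ∀ a : S, P (a : WithOne S)) (x : WithOne S) : P x :=
  WithOne.cases_on x one coe

theorem leL_iff {a b : S} (h : ∃ x : S, a * x * a = a) :
    (∃ u : WithOne S, (a : WithOne S) = u * b) ↔ ∃ u : S, a = u * b := by
  constructor
  · rintro ⟨u, hu⟩
    obtain ⟨x, hx⟩ := h
    induction u using withOneCases with
    | one =>
      rw [one_mul] at hu
      have := WithOne.coe_inj.1 hu
      subst this
      exact ⟨a * x, hx.symm⟩
    | coe u => exact ⟨u, by exact_mod_cast hu⟩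
  · rintro ⟨u, hu⟩
    exact ⟨u, by exact_mod_cast hu⟩

theorem leR_iff {a b : S} (h : ∃ x : S, a * x * a = a) :
    (∃ u : WithOne S, (a : WithOne S) = b * u) ↔ ∃ u : S, a = b * u := by
  constructor
  · rintro ⟨u, hu⟩
    obtain ⟨x, hx⟩ := h
    induction u using withOneCases with
    | one =>
      rw [mul_one] at hu
      have := WithOne.coe_inj.1 hu
      subst this
      exact ⟨x * a, by rw [← mul_assoc, hx]⟩
    | coe u => exact ⟨u, by exact_mod_cast hu⟩
  · rintro ⟨u, hu⟩
    exact ⟨u, by exact_mod_cast hu⟩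

theorem leJ_iff {a b : S} (h : ∃ x : S, a * x * a = a) :
    (∃ u v : WithOne S, (a : WithOne S) = u * b * v) ↔ ∃ u v : S, a = u * b * v := by
  constructor
  · rintro ⟨u, v, hu⟩
    obtain ⟨x, hx⟩ := h
    induction u using withOneCases with
    | one =>
      induction v using withOneCases with
      | one =>
        have : a = b := by
          rw [one_mul, mul_one] at hu
          exact WithOne.coe_inj.1 hu
        subst this
        exact ⟨a * x, x * a, by rw [hx, ← mul_assoc, hx]⟩
      | coe v =>
        have : a = b * v := by
          rw [one_mul] at hu
          exact_mod_cast hu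
        refine ⟨a * x, v, ?_⟩
        rw [mul_assoc, ← this, hx]
    | coe u =>
      induction v using withOneCases with
      | one =>
        have : a = u * b := by
          rw [mul_one] at hu
          exact_mod_cast hu
        refine ⟨u, x * a, ?_⟩
        rw [← this, ← mul_assoc, hx]
      | coe v => exact ⟨u, v, by exact_mod_cast hu⟩
  · rintro ⟨u, v, hu⟩
    exact ⟨u, v, by exact_mod_cast hu⟩

theorem greenL_iff {a b : S} (ha : ∃ x : S, a * x * a = a) (hb : ∃ x : S, b * x * b = b) :
    greenL a b ↔ (∃ u : S, a = u * b) ∧ ∃ u : S, b = u * a := by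
  rw [← leL_iff ha, ← leL_iff hb]
  constructor
  · intro h
    rw [greenL, Set.ext_iff] at h
    exact ⟨(h a).1 ⟨1, (one_mul _).symm⟩, (h b).2 ⟨1, (one_mul _).symm⟩⟩
  · rintro ⟨⟨u, hu⟩, ⟨v, hv⟩⟩
    ext x
    constructor
    · rintro ⟨w, rfl⟩
      exact ⟨w * u, by rw [hu, mul_assoc]⟩
    · rintro ⟨w, rfl⟩
      exact ⟨w * v, by rw [hv, mul_assoc]⟩

theorem greenR_iff' {a b : S} :
    greenR a b ↔ (∃ u : WithOne S, (a : WithOne S) = b * u) ∧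
      ∃ u : WithOne S, (b : WithOne S) = a * u := by
  constructor
  · intro h
    rw [greenR, Set.ext_iff] at h
    exact ⟨(h a).1 ⟨1, (mul_one _).symm⟩, (h b).2 ⟨1, (mul_one _).symm⟩⟩
  · rintro ⟨⟨u, hu⟩, ⟨v, hv⟩⟩
    ext x
    constructor
    · rintro ⟨w, rfl⟩
      exact ⟨u * w, by rw [hu, mul_assoc]⟩
    · rintro ⟨w, rfl⟩
      exact ⟨v * w, by rw [hv, mul_assoc]⟩

theorem greenR_iff {a b : S} (ha : ∃ x : S, a * x * a = a) (hb : ∃ x : S, b * x * b = b) :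
    greenR a b ↔ (∃ u : S, a = b * u) ∧ ∃ u : S, b = a * u := by
  rw [← leR_iff ha, ← leR_iff hb, greenR_iff']

theorem greenJ_iff {a b : S} (ha : ∃ x : S, a * x * a = a) (hb : ∃ x : S, b * x * b = b) :
    greenJ a b ↔ (∃ u v : S, a = u * b * v) ∧ ∃ u v : S, b = u * a * v := by
  rw [← leJ_iff ha, ← leJ_iff hb]
  constructor
  · intro h
    rw [greenJ, Set.ext_iff] at h
    exact ⟨(h a).1 ⟨1, 1, by simp⟩, (h b).2 ⟨1, 1, by simp⟩⟩
  · rintro ⟨⟨u, u', hu⟩, ⟨v, v', hv⟩⟩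
    ext x
    constructor
    · rintro ⟨w, w', rfl⟩
      exact ⟨w * u, u' * w', by rw [hu]; simp only [mul_assoc]⟩
    · rintro ⟨w, w', rfl⟩
      exact ⟨w * v, v' * w', by rw [hv]; simp only [mul_assoc]⟩

/-- Green's relations and the natural order restrict to a regular right ideal. -/
theorem restrict_aux (R : Subsemigroup S) (hreg : ∀ x ∈ R, ∃ y ∈ R, x * y * x = x)
    (hid : ∀ x ∈ R, ∀ t : S, x * t ∈ R) (x y : R) :
      (greenH x y ↔ greenH (x : S) (y : S)) ∧
      (greenL x y ↔ greenL (x : S) (y : S)) ∧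
      (greenR x y ↔ greenR (x : S) (y : S)) ∧
      (greenD x y ↔ greenD (x : S) (y : S)) ∧
      (greenJ x y ↔ greenJ (x : S) (y : S)) ∧
      (natLe x y ↔ natLe (x : S) (y : S)) := by
  have r1 : ∀ x : R, ∃ y : R, x * y * x = x := by
    rintro ⟨x, hx⟩
    obtain ⟨y, hy, h⟩ := hreg x hx
    exact ⟨⟨y, hy⟩, Subtype.ext h⟩
  have r2 : ∀ x : R, ∃ y : S, (x : S) * y * x = x := by
    rintro ⟨x, hx⟩
    obtain ⟨y, hy, h⟩ := hreg x hx
    exact ⟨y, h⟩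
  have l1 : ∀ x y : R, (∃ u : R, x = u * y) ↔ ∃ u : S, (x : S) = u * y := by
    intro x y
    constructor
    · rintro ⟨u, rfl⟩
      exact ⟨u, rfl⟩
    · rintro ⟨u, hu⟩
      obtain ⟨z, hz⟩ := r2 x
      refine ⟨⟨x * (z * u), hid _ x.2 _⟩, Subtype.ext ?_⟩
      change (x : S) = x * (z * u) * y
      rw [← mul_assoc, mul_assoc, ← hu, hz]
  have l2 : ∀ x y : R, (∃ u : R, x = y * u) ↔ ∃ u : S, (x : S) = y * u := by
    intro x y
    constructor
    · rintro ⟨u, rfl⟩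
      exact ⟨u, rfl⟩
    · rintro ⟨u, hu⟩
      obtain ⟨z, hz⟩ := r1 y
      have hz' : (y : S) * z * y = y := congrArg Subtype.val hz
      refine ⟨z * x, Subtype.ext ?_⟩
      change (x : S) = y * (z * x)
      rw [hu, ← mul_assoc, ← mul_assoc, hz']
  have l3 : ∀ x y : R, (∃ u v : R, x = u * y * v) ↔ ∃ u v : S, (x : S) = u * y * v := by
    intro x y
    constructor
    · rintro ⟨u, v, rfl⟩
      exact ⟨u, v, rfl⟩
    · rintro ⟨u, v, hu⟩
      obtain ⟨w, hw⟩ := r2 x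
      obtain ⟨z, hz⟩ := r1 y
      have hz' : (y : S) * z * y = y := congrArg Subtype.val hz
      refine ⟨⟨x * (w * u), hid _ x.2 _⟩, ⟨z * (y * v), hid _ z.2 _⟩, Subtype.ext ?_⟩
      change (x : S) = x * (w * u) * y * (z * (y * v))
      calc (x : S) = x * w * (u * y * v) := by rw [← hu, hw]
        _ = x * w * (u * (y * z * y) * v) := by rw [hz']
        _ = _ := by simp only [mul_assoc]
  have hL : ∀ x y : R, greenL x y ↔ greenL (x : S) (y : S) := fun x y => by
    rw [greenL_iff (r1 x) (r1 y), greenL_iff (r2 x) (r2 y), l1, l1]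
  have hR : ∀ x y : R, greenR x y ↔ greenR (x : S) (y : S) := fun x y => by
    rw [greenR_iff (r1 x) (r1 y), greenR_iff (r2 x) (r2 y), l2, l2]
  refine ⟨and_congr (hL x y) (hR x y), hL x y, hR x y, ?_, ?_, ?_⟩
  · constructor
    · rintro ⟨c, h1, h2⟩
      exact ⟨c, (hR _ _).1 h1, (hL _ _).1 h2⟩
    · rintro ⟨c, h1, h2⟩
      have hc : c ∈ R := by
        obtain ⟨u, hu⟩ := (greenR_iff'.1 h1).2
        induction u using withOneCases with
        | one =>
          rw [mul_one] at hu
          rw [WithOne.coe_inj.1 hu]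
          exact x.2
        | coe u =>
          have : c = x * u := by exact_mod_cast hu
          rw [this]
          exact hid _ x.2 _
      exact ⟨⟨c, hc⟩, (hR _ _).2 h1, (hL _ _).2 h2⟩
  · rw [greenJ_iff (r1 x) (r1 y), greenJ_iff (r2 x) (r2 y), l3, l3]
  · constructor
    · rintro ⟨a, b, h1, h2, h3⟩
      exact ⟨a, b, congrArg Subtype.val h1, congrArg Subtype.val h2, congrArg Subtype.val h3⟩
    · rintro ⟨a, b, h1, h2, h3⟩
      obtain ⟨z, hz⟩ := r1 y
      have hz' : (y : S) * z * y = y := congrArg Subtype.val hz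
      refine ⟨x * z, z * x, Subtype.ext ?_, Subtype.ext ?_, Subtype.ext ?_⟩
      · change (x : S) = x * z * y
        calc (x : S) = a * (y * z * y) := by rw [hz', h1]
          _ = (a * y) * z * y := by simp only [mul_assoc]
          _ = _ := by rw [← h1]
      · change (x : S) = y * (z * x)
        calc (x : S) = (y * z * y) * b := by rw [hz', h2]
          _ = y * (z * (y * b)) := by simp only [mul_assoc]
          _ = _ := by rw [← h2]
      · change (x : S) = x * (z * x)
        calc (x : S) = x * b := h3
          _ = a * (y * z * y) * b := by rw [hz', ← h1]
          _ = (a * y) * (z * (y * b)) := by simp only [mul_assoc]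
          _ = _ := by rw [← h1, ← h2]

theorem mulσ (a b c d : S) (α : R2) :
    ((a, b, R2.σ) : S × S × R2) * (c, d, α) = (a * d, b * d, α) := rfl

theorem mulτ (a b c d : S) (α : R2) :
    ((a, b, R2.τ) : S × S × R2) * (c, d, α) = (a * c, b * c, α) := rfl

/-- Every triple with `𝓛`-related components is a product of two idempotents. -/
theorem decomp (hS : IsRegularSemigroup S) (a b : S) (α : R2) (h : greenL a b) :
    ∃ e f : S × S × R2, IsIdempotentElem e ∧ IsIdempotentElem f ∧
      greenL e.1 e.2.1 ∧ greenL f.1 f.2.1 ∧ (a, b, α) = e * f := by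
  obtain ⟨⟨u, hu⟩, ⟨v, hv⟩⟩ := (greenL_iff (hS a) (hS b)).1 h
  cases α with
  | σ =>
    obtain ⟨x, hx⟩ := hS a
    have hb : b * x * a = b := by
      rw [hv, mul_assoc, mul_assoc, ← mul_assoc a, hx]
    refine ⟨(a * x, b * x, R2.τ), (a, x * a, R2.σ), ?_, ?_, greenL_mul_right h x, ?_, ?_⟩
    · rw [IsIdempotentElem, mulτ, ← mul_assoc, ← mul_assoc, hx, hb]
    · rw [IsIdempotentElem, mulσ, mul_assoc x, ← mul_assoc a, hx]
    · exact (greenL_iff (hS _) (hS _)).2 ⟨⟨a, by rw [← mul_assoc, hx]⟩, ⟨x, rfl⟩⟩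
    · rw [mulτ, hx, hb]
  | τ =>
    obtain ⟨x, hx⟩ := hS b
    have hb : a * x * b = a := by
      rw [hu, mul_assoc, mul_assoc, ← mul_assoc b, hx]
    refine ⟨(a * x, b * x, R2.σ), (x * b, b, R2.τ), ?_, ?_, greenL_mul_right h x, ?_, ?_⟩
    · rw [IsIdempotentElem, mulσ, ← mul_assoc, ← mul_assoc, hx, hb]
    · rw [IsIdempotentElem, mulτ, mul_assoc x, ← mul_assoc b, hx]
    · exact (greenL_iff (hS _) (hS _)).2 ⟨⟨x, rfl⟩, ⟨b, by rw [← mul_assoc, hx]⟩⟩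
    · rw [mulσ, hx, hb]

theorem idem_mem_TS (e : S × S × R2) (he : IsIdempotentElem e) (h : greenL e.1 e.2.1) :
    e ∈ TS S := by
  refine Subsemigroup.subset_closure ⟨he, ?_⟩
  rw [greenL, Set.ext_iff] at h
  exact (h e.1).1 ⟨1, (one_mul _).symm⟩

theorem mem_TS (hS : IsRegularSemigroup S) (x : S × S × R2) (h : greenL x.1 x.2.1) :
    x ∈ TS S := by
  obtain ⟨a, b, α⟩ := x
  obtain ⟨e, f, he, hf, h1, h2, h3⟩ := decomp hS a b α h
  rw [h3]
  exact mul_mem (idem_mem_TS e he h1) (idem_mem_TS f hf h2)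

theorem RS_ideal (x : TS S) (hx : x ∈ RS S) (t : TS S) : x * t ∈ RS S := by
  obtain ⟨⟨a, b, α⟩, h⟩ := x
  obtain ⟨⟨c, d, β⟩, h'⟩ := t
  have hx' : greenL a b := hx
  cases α <;> exact greenL_mul_right hx' _

theorem RS_reg (hS : IsRegularSemigroup S) (x : TS S) (hx : x ∈ RS S) :
    ∃ y ∈ RS S, x * y * x = x := by
  obtain ⟨⟨a, b, α⟩, h⟩ := x
  have hab : greenL a b := hx
  obtain ⟨⟨u, hu⟩, ⟨v, hv⟩⟩ := (greenL_iff (hS a) (hS b)).1 hab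
  cases α with
  | σ =>
    obtain ⟨x, hx⟩ := hS b
    have hb : a * x * b = a := by
      rw [hu, mul_assoc, mul_assoc, ← mul_assoc b, hx]
    refine ⟨⟨(x, x, R2.σ), mem_TS hS _ rfl⟩, (rfl : greenL x x), Subtype.ext ?_⟩
    change ((a, b, R2.σ) : S × S × R2) * (x, x, R2.σ) * (a, b, R2.σ) = (a, b, R2.σ)
    rw [mulσ, mulσ, hx, hb]
  | τ =>
    obtain ⟨x, hx⟩ := hS a
    have hb : b * x * a = b := by
      rw [hv, mul_assoc, mul_assoc, ← mul_assoc a, hx]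
    refine ⟨⟨(x, x, R2.τ), mem_TS hS _ rfl⟩, (rfl : greenL x x), Subtype.ext ?_⟩
    change ((a, b, R2.τ) : S × S × R2) * (x, x, R2.τ) * (a, b, R2.τ) = (a, b, R2.τ)
    rw [mulτ, mulτ, hx, hb]

end Aux

/-- for a regular semigroup `S`, `R(S) = {(s,t,α) ∈ T(S) : s 𝓛 t}` is a regular
subsemigroup of `T(S)`, every element of `R(S)` is a product of two idempotents of `R(S)`
(so `R(S)` is a semiband of depth 2), `s ↦ (s,s,σ)` embeds `S` into `R(S)`, and the Green
relations and natural partial order of `R(S)` are the restrictions of those of `T(S)`. -/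
theorem statement_18 {S : Type*} [Semigroup S] (hS : IsRegularSemigroup S) :
    ((RS S : Set ↥(TS S)) =
        {x : ↥(TS S) | greenL (x : S × S × R2).1 (x : S × S × R2).2.1}) ∧
    (∀ x ∈ RS S, ∃ y ∈ RS S, x * y * x = x) ∧
    (∀ x ∈ RS S, ∃ e f : ↥(TS S), e ∈ RS S ∧ f ∈ RS S ∧ IsIdempotentElem e ∧
      IsIdempotentElem f ∧ x = e * f) ∧
    (∃ φ : S → ↥(RS S), (∀ s : S, ((φ s : ↥(TS S)) : S × S × R2) = (s, s, R2.σ)) ∧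
      (∀ s t : S, φ (s * t) = φ s * φ t) ∧ Function.Injective φ) ∧
    (∀ x y : ↥(RS S),
      (greenH x y ↔ greenH (x : ↥(TS S)) (y : ↥(TS S))) ∧
      (greenL x y ↔ greenL (x : ↥(TS S)) (y : ↥(TS S))) ∧
      (greenR x y ↔ greenR (x : ↥(TS S)) (y : ↥(TS S))) ∧
      (greenD x y ↔ greenD (x : ↥(TS S)) (y : ↥(TS S))) ∧
      (greenJ x y ↔ greenJ (x : ↥(TS S)) (y : ↥(TS S))) ∧
      (natLe x y ↔ natLe (x : ↥(TS S)) (y : ↥(TS S)))) := by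
  refine ⟨rfl, RS_reg hS, ?_, ?_, restrict_aux (RS S) (RS_reg hS) RS_ideal⟩
  · rintro ⟨⟨a, b, α⟩, hx⟩ h
    obtain ⟨e, f, he, hf, h1, h2, h3⟩ := decomp hS a b α h
    exact ⟨⟨e, mem_TS hS e h1⟩, ⟨f, mem_TS hS f h2⟩, h1, h2, Subtype.ext he, Subtype.ext hf,
      Subtype.ext h3⟩
  · refine ⟨fun s => ⟨⟨(s, s, R2.σ), mem_TS hS _ rfl⟩, (rfl : greenL s s)⟩, fun _ => rfl,
      fun _ _ => rfl, ?_⟩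
    intro s t h
    exact congrArg (fun z : RS S => ((z : TS S) : S × S × R2).1) h

end SemibandEmbed
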